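/- Let r > 0 and let n, m be integers each satisfying condition (⋆). Let u, v ∈ X_r, let w_u, w_v ∈ X_r satisfy √n·w_u − (1/p⁰)Q(w_u,w_u) = u and √m·w_v − (1/p⁰)Q(w_v,w_v) = v, and set Q_n(u,u) = n√n·w_u − n·u and Q_m(v,v) = m√m·w_v − m·v. Then ‖Q_n(u,u) − Q_m(v,v)‖ ≤ 4Cr·(2Cr²/n + 2Cr²/m + ‖u − v‖). -/

import Mathlib

/-!
Put `U = √n w_u` and `V = √m w_v`. Since `Q` is quadratic, `Q_n(u,u) = (1/p⁰)Q(U,U)` and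
`Q_m(v,v) = (1/p⁰)Q(V,V)`. Integrating the equation for `w_u`, the collision term drops out
(conservation of the number of particles), so nonnegativity gives `‖U‖ = ‖u‖ ≤ r`, and likewise
`‖V‖ ≤ r`. The Lipschitz estimate `‖(1/p⁰)Q(f,f) - (1/p⁰)Q(g,g)‖ ≤ 2C(‖f‖ + ‖g‖)‖f - g‖`
(`integral_abs_Qcoll_sub_le`) bounds the left side by `4Cr‖U - V‖`, and, applied with `g = 0`,
gives `‖U - u‖ = ‖(1/p⁰)Q(w_u,w_u)‖ ≤ 2C‖w_u‖² ≤ 2Cr²/n`. The triangle inequality concludes.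

Both facts about `Q` rest on the collision `(p̄, q̄) ↦ (p̄′, q̄′)` being, for each `ω`, an involution
that preserves `dp̄ dq̄ / (p⁰q⁰)` (`collMap_involutive`, `collMap_measurePreserving`): it exchanges
the integrands of gain and loss. To see this, split momenta orthogonally along `ω̂`, and write
`p·ω̂ = A sinh a`, `q·ω̂ = B sinh b`, where `A`, `B` are the energies of the orthogonal components.
Then `dp̄ / p⁰ = da dy`, and the collision reflects both rapidities about the rapidity `η` of the
total momentum: `a ↦ 2η - a`, `b ↦ 2η - b`. By boost equivariance `η = b + g(a - b)` with `g` odd,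
so in the variables `(d, b)`, `d = a - b`, the map is `(d, b) ↦ (-d, b + 2g(d))`. This visibly
preserves Lebesgue measure and squares to the identity.
-/

open MeasureTheory Real

noncomputable section

/-- Momentum space `ℝ³`. -/
abbrev E3 : Type := EuclideanSpace ℝ (Fin 3)

/-- The scalar product associated with the Bianchi type I metric coefficients `α = a(t)`,
`β = b(t)`: `p̄·q̄ = α²p¹q¹ + β²(p²q² + p³q³)`. -/
def mdot (α β : ℝ) (p q : E3) : ℝ :=
  α ^ 2 * p 0 * q 0 + β ^ 2 * (p 1 * q 1 + p 2 * q 2)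

/-- `p⁰ = √(1 + |p̄|²)` where `|p̄|² = p̄·p̄`. -/
def pZ (α β : ℝ) (p : E3) : ℝ := Real.sqrt (1 + mdot α β p p)

/-- `ω` normalized to unit length for the metric norm. -/
def omHat (α β : ℝ) (ω : E3) : E3 := (Real.sqrt (mdot α β ω ω))⁻¹ • ω

/-- The total energy `e = p⁰ + q⁰`. -/
def collE (α β : ℝ) (p q : E3) : ℝ := pZ α β p + pZ α β q

/-- The function `C(p̄, q̄, ω)` of Glassey's representation of post-collisional momenta. -/
def collC (α β : ℝ) (p q ω : E3) : ℝ :=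
  2 * pZ α β p * pZ α β q * collE α β p q *
      mdot α β (omHat α β ω) ((pZ α β q)⁻¹ • q - (pZ α β p)⁻¹ • p) /
    (collE α β p q ^ 2 - mdot α β (omHat α β ω) (p + q) ^ 2)

/-- The post-collisional momentum `p̄′ = p̄ + C(p̄,q̄,ω)ω̂`. -/
def pPr (α β : ℝ) (p q ω : E3) : E3 := p + collC α β p q ω • omHat α β ω

/-- The post-collisional momentum `q̄′ = q̄ − C(p̄,q̄,ω)ω̂`. -/
def qPr (α β : ℝ) (p q ω : E3) : E3 := q - collC α β p q ω • omHat α β ω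

/-- The surface measure on the unit sphere `S² ⊂ ℝ³`. -/
def sphMeas : Measure (Metric.sphere (0 : E3) 1) := (volume : Measure E3).toSphere

/-- The gain term `Q⁺(f,g)`. -/
def Qplus (α β : ℝ) (S₀ : E3 → E3 → E3 → E3 → ℝ) (f g : E3 → ℝ) (p : E3) : ℝ :=
  α * β ^ 2 *
    ∫ q : E3, (pZ α β q)⁻¹ *
      ∫ ω : Metric.sphere (0 : E3) 1,
        f (pPr α β p q ω) * g (qPr α β p q ω) *
          S₀ p q (pPr α β p q ω) (qPr α β p q ω) ∂sphMeas

/-- The loss term `Q⁻(f,g)`. -/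
def Qminus (α β : ℝ) (S₀ : E3 → E3 → E3 → E3 → ℝ) (f g : E3 → ℝ) (p : E3) : ℝ :=
  α * β ^ 2 *
    ∫ q : E3, (pZ α β q)⁻¹ *
      ∫ ω : Metric.sphere (0 : E3) 1,
        f p * g q * S₀ p q (pPr α β p q ω) (qPr α β p q ω) ∂sphMeas

/-- The collision operator `Q = Q⁺ − Q⁻`. -/
def Qcoll (α β : ℝ) (S₀ : E3 → E3 → E3 → E3 → ℝ) (f g : E3 → ℝ) (p : E3) : ℝ :=
  Qplus α β S₀ f g p - Qminus α β S₀ f g p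

/-- The space `L¹(ℝ³)`. -/
abbrev L1 : Type := Lp ℝ 1 (volume : Measure E3)

/-- Membership in `X_r = {f ∈ L¹(ℝ³) : f ≥ 0 a.e., ‖f‖ ≤ r}`. -/
def memX (r : ℝ) (f : L1) : Prop := (0 ≤ᵐ[volume] ⇑f) ∧ ‖f‖ ≤ r

end

/-! ### Shears and rapidities -/

/-- Translation invariance of Lebesgue measure, fibrewise over `Z`. -/
lemma shear_measurePreserving {Z : Type*} [MeasurableSpace Z] (ζ : Measure Z) [SFinite ζ]
    {φ : ℝ → ℝ} (hφ : MeasurePreserving φ) {h : Z → ℝ} (hh : Measurable h) :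
    MeasurePreserving (fun x : ℝ × Z => (h x.2 + φ x.1, x.2))
      ((volume : Measure ℝ).prod ζ) ((volume : Measure ℝ).prod ζ) := by
  have h1 : MeasurePreserving (fun x : Z × ℝ => (id x.1, h x.1 + φ x.2))
      (ζ.prod volume) (ζ.prod volume) := by
    refine (MeasurePreserving.id ζ).skew_product (g := fun z x => h z + φ x) ?_ ?_
    · exact (hh.comp measurable_fst).add (hφ.measurable.comp measurable_snd)
    · filter_upwards with z
      exact ((measurePreserving_add_left volume (h z)).comp hφ).map_eq
  exact (Measure.measurePreserving_swap.comp h1).comp Measure.measurePreserving_swap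

lemma shear_fst_measurePreserving {W : Type*} [MeasurableSpace W] (ζ : Measure W) [SFinite ζ]
    {φ : ℝ → ℝ} (hφ : MeasurePreserving φ) {h : W × (ℝ × W) → ℝ} (hh : Measurable h) :
    MeasurePreserving (fun x : (ℝ × W) × (ℝ × W) => ((h (x.1.2, x.2) + φ x.1.1, x.1.2), x.2))
      (((volume : Measure ℝ).prod ζ).prod ((volume : Measure ℝ).prod ζ))
      (((volume : Measure ℝ).prod ζ).prod ((volume : Measure ℝ).prod ζ)) := by
  have h1 := shear_measurePreserving (ζ.prod ((volume : Measure ℝ).prod ζ)) hφ hh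
  have h2 := measurePreserving_prodAssoc (volume : Measure ℝ) ζ ((volume : Measure ℝ).prod ζ)
  exact (h2.symm.comp h1).comp h2

/-- The rapidity, in the frame where a particle of mass `B` is at rest, of the total momentum of
that particle and a particle of mass `A` and rapidity `d` (in one space dimension). -/
noncomputable def gRap (A B d : ℝ) : ℝ := arsinh (A * sinh d / √(A ^ 2 + B ^ 2 + 2 * A * B * cosh d))

lemma gRap_neg (A B d : ℝ) : gRap A B (-d) = - gRap A B d := by
  simp [gRap, neg_div, arsinh_neg]

lemma gRap_radicand_pos {A B : ℝ} (hA : 0 < A) (hB : 0 < B) (d : ℝ) :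
    0 < A ^ 2 + B ^ 2 + 2 * A * B * cosh d := by
  have := cosh_pos d
  positivity

lemma sinh_gRap (A B d : ℝ) :
    sinh (gRap A B d) = A * sinh d / √(A ^ 2 + B ^ 2 + 2 * A * B * cosh d) := sinh_arsinh _

lemma cosh_gRap {A B : ℝ} (hA : 0 < A) (hB : 0 < B) (d : ℝ) :
    cosh (gRap A B d) = (A * cosh d + B) / √(A ^ 2 + B ^ 2 + 2 * A * B * cosh d) := by
  have hR := gRap_radicand_pos hA hB d
  have hc := cosh_pos d
  rw [gRap, cosh_arsinh, div_pow, sq_sqrt hR.le]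
  rw [Real.sqrt_eq_iff_eq_sq (by positivity) (by positivity), div_pow, sq_sqrt hR.le]
  field_simp
  rw [sinh_sq]; ring

lemma sinh_sub_sinh_mid (x y : ℝ) : sinh (x + y) - sinh (x - y) = 2 * cosh x * sinh y := by
  rw [sinh_add, sinh_sub]; ring

/-- Glassey's collision parameter in rapidity coordinates `p⁰ = A cosh a`, `p·ω̂ = A sinh a`,
`q⁰ = B cosh b`, `q·ω̂ = B sinh b`. With `η = b + g` the rapidity of the total momentum,
`g = gRap A B (a - b)`, the collision replaces `a`, `b` by `2η - a`, `2η - b`. -/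
lemma coll_rapidity {A B : ℝ} (hA : 0 < A) (hB : 0 < B) (a b : ℝ) :
    2 * (A * cosh a) * (B * cosh b) * (A * cosh a + B * cosh b) *
        ((B * cosh b)⁻¹ * (B * sinh b) - (A * cosh a)⁻¹ * (A * sinh a)) /
      ((A * cosh a + B * cosh b) ^ 2 - (A * sinh a + B * sinh b) ^ 2) =
      A * sinh (2 * gRap A B (a - b) + b + -(a - b)) - A * sinh a ∧
    2 * (A * cosh a) * (B * cosh b) * (A * cosh a + B * cosh b) *
        ((B * cosh b)⁻¹ * (B * sinh b) - (A * cosh a)⁻¹ * (A * sinh a)) /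
      ((A * cosh a + B * cosh b) ^ 2 - (A * sinh a + B * sinh b) ^ 2) =
      B * sinh b - B * sinh (2 * gRap A B (a - b) + b) := by
  obtain ⟨d, rfl⟩ : ∃ d, a = d + b := ⟨a - b, by ring⟩
  have hR := gRap_radicand_pos hA hB d
  have hs := sinh_gRap A B d
  have hc := cosh_gRap hA hB d
  have hg : d + b - b = d := by ring
  rw [hg]
  set g := gRap A B d
  set R := √(A ^ 2 + B ^ 2 + 2 * A * B * cosh d) with hRdef
  have hRpos : 0 < R := Real.sqrt_pos.2 hR
  have hR2 : R ^ 2 = A ^ 2 + B ^ 2 + 2 * A * B * cosh d := sq_sqrt hR.le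
  have hd := cosh_sq d
  have hb := cosh_sq b
  -- `cosh η = e / R` for the rapidity `η = b + g` of the total momentum
  have hη : R * cosh (b + g) = A * cosh (d + b) + B * cosh b := by
    rw [cosh_add, cosh_add, hs, hc]; field_simp; ring
  have hden : (A * cosh (d + b) + B * cosh b) ^ 2 - (A * sinh (d + b) + B * sinh b) ^ 2 = R ^ 2 := by
    rw [hR2, cosh_add, sinh_add]
    linear_combination (A ^ 2 * (cosh d ^ 2 - sinh d ^ 2) + B ^ 2 + 2 * A * B * cosh d) * hb
      + A ^ 2 * hd
  have hnum : 2 * (A * cosh (d + b)) * (B * cosh b) * (A * cosh (d + b) + B * cosh b) *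
        ((B * cosh b)⁻¹ * (B * sinh b) - (A * cosh (d + b))⁻¹ * (A * sinh (d + b))) =
      - 2 * (A * B) * (R * cosh (b + g)) * sinh d := by
    rw [hη]
    have h1 := cosh_pos b
    have h2 := cosh_pos (d + b)
    have h3 : sinh d = sinh (d + b) * cosh b - cosh (d + b) * sinh b := by
      rw [← sinh_sub]; ring_nf
    rw [h3]; field_simp; ring
  rw [hden, hnum]
  constructor
  · have h1 := sinh_sub_sinh_mid (b + g) (g - d)
    rw [show b + g + (g - d) = 2 * g + b + -d by ring, show b + g - (g - d) = d + b by ring] at h1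
    rw [← mul_sub, h1, sinh_sub, hs, hc]
    field_simp; ring
  · have h1 := sinh_sub_sinh_mid (b + g) g
    rw [show b + g + g = 2 * g + b by ring, show b + g - g = b by ring] at h1
    rw [← mul_sub, ← neg_sub, h1, hs]
    field_simp

/-! ### Rapidity coordinates for the metric -/

section Metric

variable {α β : ℝ}

lemma mdot_add_right (p q s : E3) : mdot α β p (q + s) = mdot α β p q + mdot α β p s := by
  simp [mdot]; ring

lemma mdot_smul_right (c : ℝ) (p q : E3) : mdot α β p (c • q) = c * mdot α β p q := by
  simp [mdot]; ring

lemma mdot_sub_right (p q s : E3) : mdot α β p (q - s) = mdot α β p q - mdot α β p s := by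
  simp [mdot]; ring

lemma mdot_comm (p q : E3) : mdot α β p q = mdot α β q p := by
  simp [mdot]; ring

lemma mdot_self_nonneg (p : E3) : 0 ≤ mdot α β p p := by
  have : mdot α β p p = (α * p 0) ^ 2 + (β * p 1) ^ 2 + (β * p 2) ^ 2 := by
    simp [mdot]; ring
  rw [this]; positivity

lemma one_le_pZ (p : E3) : 1 ≤ pZ α β p := by
  rw [pZ, Real.one_le_sqrt]
  linarith [mdot_self_nonneg (α := α) (β := β) p]

lemma pZ_pos (p : E3) : 0 < pZ α β p := one_pos.trans_le (one_le_pZ p)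

lemma pZ_sq (p : E3) : pZ α β p ^ 2 = 1 + mdot α β p p :=
  sq_sqrt (by linarith [mdot_self_nonneg (α := α) (β := β) p])

lemma continuous_mdot : Continuous fun x : E3 × E3 => mdot α β x.1 x.2 := by
  unfold mdot; fun_prop

lemma continuous_pZ : Continuous (pZ α β) := by
  unfold pZ mdot; fun_prop

lemma mdot_omHat (hα : 0 < α) (hβ : 0 < β) {ω : E3} (hω : ω ≠ 0) :
    mdot α β (omHat α β ω) (omHat α β ω) = 1 := by
  have hpos : 0 < mdot α β ω ω := by
    refine lt_of_le_of_ne (mdot_self_nonneg ω) fun h => hω ?_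
    have h1 : (α * ω 0) ^ 2 + (β * ω 1) ^ 2 + (β * ω 2) ^ 2 = 0 := by
      rw [h]; simp [mdot]; ring
    have h0 : α * ω 0 = 0 := by nlinarith [sq_nonneg (α * ω 0), sq_nonneg (β * ω 1), sq_nonneg (β * ω 2)]
    have h2 : β * ω 1 = 0 := by nlinarith [sq_nonneg (α * ω 0), sq_nonneg (β * ω 1), sq_nonneg (β * ω 2)]
    have h3 : β * ω 2 = 0 := by nlinarith [sq_nonneg (α * ω 0), sq_nonneg (β * ω 1), sq_nonneg (β * ω 2)]
    ext i
    fin_cases i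
    · simpa [hα.ne'] using h0
    · simpa [hβ.ne'] using h2
    · simpa [hβ.ne'] using h3
  have hs := sq_sqrt hpos.le
  have hs0 := Real.sqrt_pos.2 hpos
  rw [omHat, mdot_smul_right, mdot_comm (_ • ω) ω, mdot_smul_right]
  field_simp
  exact hs.symm

/-- The metric scalar product with `w` as a linear form. -/
def mdotL (α β : ℝ) (w : E3) : E3 →ₗ[ℝ] ℝ where
  toFun := mdot α β w
  map_add' := mdot_add_right w
  map_smul' c p := by simp [mdot_smul_right]

/-- The orthogonal complement of `w` for the metric scalar product. -/
abbrev perp (α β : ℝ) (w : E3) : Submodule ℝ E3 := LinearMap.ker (mdotL α β w)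

lemma mdot_perp {w : E3} (y : perp α β w) : mdot α β w y = 0 := y.2

/-- The orthogonal splitting `ℝ³ = ℝ w ⊕ wᗮ` for the metric scalar product, `w` a unit vector. -/
def splitEquiv {w : E3} (hw : mdot α β w w = 1) : (ℝ × perp α β w) ≃ₗ[ℝ] E3 where
  toFun x := x.1 • w + (x.2 : E3)
  map_add' x y := by simp [add_smul]; abel
  map_smul' c x := by simp [mul_smul]
  invFun p := (mdot α β w p, ⟨p - mdot α β w p • w, by
    change mdot α β w _ = 0
    rw [mdot_sub_right, mdot_smul_right, hw]; ring⟩)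
  left_inv x := by
    have h : mdot α β w (x.1 • w + (x.2 : E3)) = x.1 := by
      rw [mdot_add_right, mdot_smul_right, hw, mdot_perp]; ring
    ext1
    · exact h
    · ext1
      simp only [h]; abel
  right_inv p := by simp

/-- Rapidity coordinates along a metric unit vector `w`: the momentum with component `y`
orthogonal to `w` and rapidity `a` along `w`, where `√(1 + |y|²)` plays the role of the mass. -/
noncomputable def rapMap (α β : ℝ) (w : E3) (x : ℝ × perp α β w) : E3 :=
  (pZ α β (x.2 : E3) * sinh x.1) • w + (x.2 : E3)

lemma continuous_rapMap (w : E3) : Continuous (rapMap α β w) := by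
  have := continuous_pZ (α := α) (β := β)
  unfold rapMap; fun_prop

lemma mdot_line {w : E3} (hw : mdot α β w w = 1) (x : ℝ) (y : perp α β w) :
    mdot α β w (x • w + (y : E3)) = x := by
  rw [mdot_add_right, mdot_smul_right, hw, mdot_perp]; ring

lemma mdot_self_line {w : E3} (hw : mdot α β w w = 1) (x : ℝ) (y : perp α β w) :
    mdot α β (x • w + (y : E3)) (x • w + (y : E3)) = x ^ 2 + mdot α β (y : E3) y := by
  rw [mdot_add_right, mdot_smul_right, mdot_comm, mdot_line hw, mdot_comm, mdot_add_right,
    mdot_smul_right, mdot_comm, mdot_perp]; ring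

lemma pZ_line {w : E3} (hw : mdot α β w w = 1) (x : ℝ) (y : perp α β w) :
    pZ α β (x • w + (y : E3)) = √(x ^ 2 + pZ α β (y : E3) ^ 2) := by
  rw [pZ_sq, pZ, mdot_self_line hw]; ring_nf

lemma pZ_rapMap {w : E3} (hw : mdot α β w w = 1) (x : ℝ × perp α β w) :
    pZ α β (rapMap α β w x) = pZ α β (x.2 : E3) * cosh x.1 := by
  have h1 := pZ_pos (α := α) (β := β) (x.2 : E3)
  have h2 := cosh_pos x.1
  rw [rapMap, pZ_line hw, Real.sqrt_eq_iff_eq_sq (by positivity) (by positivity), mul_pow,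
    mul_pow, cosh_sq]
  ring

lemma rapMap_surjective {w : E3} (hw : mdot α β w w = 1) :
    Function.Surjective (rapMap α β w) := by
  intro p
  obtain ⟨⟨x, y⟩, rfl⟩ := (splitEquiv hw).surjective p
  have h1 := pZ_pos (α := α) (β := β) (y : E3)
  refine ⟨(arsinh (x / pZ α β (y : E3)), y), ?_⟩
  simp only [rapMap, sinh_arsinh, mul_div_cancel₀ _ h1.ne']
  rfl

/-- The Lorentz invariant measure `dp̄ / p⁰` on momentum space. -/
noncomputable def nuMeas (α β : ℝ) : Measure E3 :=
  (volume : Measure E3).withDensity fun p => ((Real.toNNReal (pZ α β p)⁻¹ : NNReal) : ENNReal)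

instance : SFinite (nuMeas α β) := by unfold nuMeas; infer_instance

lemma lintegral_rapidity {A : ℝ} (hA : 0 < A) (G : ℝ → ENNReal) :
    ∫⁻ x, ((Real.toNNReal (√(x ^ 2 + A ^ 2))⁻¹ : NNReal) : ENNReal) * G x
      = ∫⁻ a, G (A * sinh a) := by
  have hder : ∀ a ∈ Set.univ, HasDerivWithinAt (fun a => A * sinh a) (A * cosh a) Set.univ a :=
    fun a _ => ((hasDerivAt_sinh a).const_mul A).hasDerivWithinAt
  have hinj : Set.InjOn (fun a => A * sinh a) Set.univ := fun a _ b _ h =>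
    sinh_injective (mul_left_cancel₀ hA.ne' h)
  have hsurj : (fun a => A * sinh a) '' Set.univ = Set.univ := by
    rw [Set.image_univ, Set.range_eq_univ]
    exact fun x => ⟨arsinh (x / A), by simp [mul_div_cancel₀ _ hA.ne']⟩
  have h := lintegral_image_eq_lintegral_abs_deriv_mul MeasurableSet.univ hder hinj
    (fun x => ((Real.toNNReal (√(x ^ 2 + A ^ 2))⁻¹ : NNReal) : ENNReal) * G x)
  rw [hsurj, Measure.restrict_univ] at h
  rw [h]
  refine lintegral_congr fun a => ?_
  have hc := cosh_pos a
  have h1 : √((A * sinh a) ^ 2 + A ^ 2) = A * cosh a := by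
    rw [Real.sqrt_eq_iff_eq_sq (by positivity) (by positivity), mul_pow, mul_pow, cosh_sq]; ring
  rw [h1, abs_of_pos (by positivity), ← mul_assoc]
  change ENNReal.ofReal _ * ENNReal.ofReal _ * _ = _
  rw [← ENNReal.ofReal_mul (by positivity), mul_inv_cancel₀ (by positivity)]
  simp

/-- In rapidity coordinates `dp̄ / p⁰` is, up to a constant, the product Lebesgue measure `da dy`. -/
lemma nuMeas_eq_smul_map {w : E3} (hw : mdot α β w w = 1) : ∃ c : NNReal,
    nuMeas α β = c • Measure.map (rapMap α β w)
      ((volume : Measure ℝ).prod (volume : Measure (perp α β w))) := by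
  let e := (splitEquiv hw).toContinuousLinearEquiv
  let κ := (volume : Measure ℝ).prod (volume : Measure (perp α β w))
  have hvol := Measure.isAddLeftInvariant_eq_smul (volume : Measure E3) (Measure.map e κ)
  refine ⟨Measure.addHaarScalarFactor (volume : Measure E3) (Measure.map e κ), ?_⟩
  set c := Measure.addHaarScalarFactor (volume : Measure E3) (Measure.map e κ)
  have hdm : Measurable fun p : E3 => ((Real.toNNReal (pZ α β p)⁻¹ : NNReal) : ENNReal) := by
    have := (continuous_pZ (α := α) (β := β)).measurable
    fun_prop
  refine Measure.ext_of_lintegral _ fun F hF => ?_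
  have he : Measurable e := e.continuous.measurable
  have hr := (continuous_rapMap (α := α) (β := β) w).measurable
  rw [nuMeas, hvol, lintegral_withDensity_eq_lintegral_mul _ hdm hF, lintegral_smul_measure,
    lintegral_smul_measure, lintegral_map hF hr, lintegral_map (hdm.mul hF) he]
  congr 1
  refine (lintegral_prod_symm _ ((hdm.mul hF).comp he).aemeasurable).trans
    (Eq.trans (lintegral_congr fun y => ?_)
      (lintegral_prod_symm _ (hF.comp hr).aemeasurable).symm)
  change _ = ∫⁻ x, F ((pZ α β (y : E3) * sinh x) • w + (y : E3))
  rw [← lintegral_rapidity (pZ_pos (y : E3)) fun x => F (x • w + (y : E3))]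
  refine lintegral_congr fun x => ?_
  rw [← pZ_line hw]
  rfl

end Metric

/-! ### The collision map preserves the invariant measure -/

section Collision

variable {α β : ℝ}

/-- The collision in direction `w`, written in rapidity coordinates. -/
noncomputable def rapColl (α β : ℝ) (w : E3) (x : (ℝ × perp α β w) × (ℝ × perp α β w)) :
    (ℝ × perp α β w) × (ℝ × perp α β w) :=
  let t := 2 * gRap (pZ α β (x.1.2 : E3)) (pZ α β (x.2.2 : E3)) (x.1.1 - x.2.1) + x.2.1
  ((t + -(x.1.1 - x.2.1), x.1.2), (t, x.2.2))

lemma rapColl_involutive (w : E3) : Function.Involutive (rapColl α β w) := by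
  rintro ⟨⟨a, y⟩, ⟨b, z⟩⟩
  simp only [rapColl]
  set g := gRap (pZ α β (y : E3)) (pZ α β (z : E3)) (a - b)
  have h : 2 * g + b + -(a - b) - (2 * g + b) = -(a - b) := by ring
  rw [h, gRap_neg]
  ext1 <;> ext1 <;> simp only <;> ring

/-- With `d = a - b` the collision is `(d, b) ↦ (-d, b + 2 g(d))`, a composition of shears and
a sign change, so no Jacobian has to be computed. -/
lemma rapColl_measurePreserving (w : E3) :
    MeasurePreserving (rapColl α β w)
      (((volume : Measure ℝ).prod volume).prod ((volume : Measure ℝ).prod volume))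
      (((volume : Measure ℝ).prod volume).prod ((volume : Measure ℝ).prod volume)) := by
  have hpZ := continuous_pZ (α := α) (β := β)
  have h1 := shear_fst_measurePreserving (volume : Measure (perp α β w))
    (MeasurePreserving.id (volume : Measure ℝ)) (h := fun x => -x.2.1) (by fun_prop)
  have hg : Measurable fun x : perp α β w × (ℝ × perp α β w) =>
      2 * gRap (pZ α β (x.2.2 : E3)) (pZ α β (x.1 : E3)) x.2.1 := by
    have := continuous_arsinh.measurable
    have := hpZ.measurable
    unfold gRap
    fun_prop
  have h2 := shear_fst_measurePreserving (volume : Measure (perp α β w))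
    (MeasurePreserving.id (volume : Measure ℝ)) hg
  have h3 := shear_fst_measurePreserving (volume : Measure (perp α β w))
    (Measure.measurePreserving_neg (volume : Measure ℝ)) (h := fun x => x.2.1) (by fun_prop)
  have h := h3.comp ((Measure.measurePreserving_swap.comp
    (h2.comp Measure.measurePreserving_swap)).comp h1)
  convert h using 1
  ext1 x
  simp [rapColl, Function.comp_def, sub_eq_neg_add]

/-- The collision `(p̄, q̄) ↦ (p̄′, q̄′)` with parameter `ω`. -/
noncomputable def collMap (α β : ℝ) (ω : E3) (x : E3 × E3) : E3 × E3 :=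
  (pPr α β x.1 x.2 ω, qPr α β x.1 x.2 ω)

lemma measurable_collMap : Measurable fun x : E3 × (E3 × E3) => collMap α β x.1 x.2 := by
  have hpZ := (continuous_pZ (α := α) (β := β)).measurable
  have hm {f g : E3 × (E3 × E3) → E3} (hf : Measurable f) (hg : Measurable g) :
      Measurable fun x => mdot α β (f x) (g x) :=
    (continuous_mdot (α := α) (β := β)).measurable.comp (hf.prodMk hg)
  have h1 : Measurable fun x : E3 × (E3 × E3) => omHat α β x.1 := by
    unfold omHat
    exact (hm measurable_fst measurable_fst).sqrt.inv.smul measurable_fst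
  have h2 : Measurable fun x : E3 × (E3 × E3) => collC α β x.2.1 x.2.2 x.1 := by
    unfold collC collE
    exact (Measurable.mul (by fun_prop) (hm h1 (by fun_prop))).div
      (Measurable.sub (by fun_prop) ((hm h1 (by fun_prop)).pow_const 2))
  unfold collMap pPr qPr
  fun_prop

/-- Rapidity coordinates conjugate the collision with parameter `ω` to `rapColl`. -/
lemma collMap_rapMap {ω : E3} (hw : mdot α β (omHat α β ω) (omHat α β ω) = 1)
    (x : (ℝ × perp α β (omHat α β ω)) × (ℝ × perp α β (omHat α β ω))) :
    collMap α β ω (Prod.map (rapMap α β (omHat α β ω)) (rapMap α β (omHat α β ω)) x) =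
      Prod.map (rapMap α β (omHat α β ω)) (rapMap α β (omHat α β ω))
        (rapColl α β (omHat α β ω) x) := by
  obtain ⟨⟨a, y⟩, ⟨b, z⟩⟩ := x
  have key := coll_rapidity (pZ_pos (α := α) (β := β) (y : E3))
    (pZ_pos (α := α) (β := β) (z : E3)) a b
  have hd (a : ℝ) (y : perp α β (omHat α β ω)) :
      mdot α β (omHat α β ω) (rapMap α β (omHat α β ω) (a, y)) = pZ α β (y : E3) * sinh a :=
    mdot_line hw _ _
  have hcoll : collC α β (rapMap α β (omHat α β ω) (a, y)) (rapMap α β (omHat α β ω) (b, z)) ω = 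
      2 * (pZ α β (y : E3) * cosh a) * (pZ α β (z : E3) * cosh b) *
          (pZ α β (y : E3) * cosh a + pZ α β (z : E3) * cosh b) *
        ((pZ α β (z : E3) * cosh b)⁻¹ * (pZ α β (z : E3) * sinh b) -
          (pZ α β (y : E3) * cosh a)⁻¹ * (pZ α β (y : E3) * sinh a)) /
      ((pZ α β (y : E3) * cosh a + pZ α β (z : E3) * cosh b) ^ 2 -
        (pZ α β (y : E3) * sinh a + pZ α β (z : E3) * sinh b) ^ 2) := by
    rw [collC, collE, pZ_rapMap hw, pZ_rapMap hw, mdot_sub_right, mdot_smul_right,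
      mdot_smul_right, mdot_add_right, hd, hd]
  simp only [Prod.map, collMap, rapColl]
  ext1
  · simp only [pPr]
    rw [hcoll, key.1]
    simp only [rapMap]
    module
  · simp only [qPr]
    rw [hcoll, key.2]
    simp only [rapMap]
    module

lemma collMap_involutive {ω : E3} (hw : mdot α β (omHat α β ω) (omHat α β ω) = 1) :
    Function.Involutive (collMap α β ω) := by
  intro x
  obtain ⟨x, rfl⟩ := ((rapMap_surjective hw).prodMap (rapMap_surjective hw)) x
  rw [collMap_rapMap hw, collMap_rapMap hw, rapColl_involutive]

/-- Every collision preserves `dp̄ dq̄ / (p⁰ q⁰)`; equivalently, its Jacobian has absolute value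
`p′⁰ q′⁰ / (p⁰ q⁰)`. -/
lemma collMap_measurePreserving {ω : E3} (hw : mdot α β (omHat α β ω) (omHat α β ω) = 1) :
    MeasurePreserving (collMap α β ω) ((nuMeas α β).prod (nuMeas α β))
      ((nuMeas α β).prod (nuMeas α β)) := by
  obtain ⟨c, hc⟩ := nuMeas_eq_smul_map hw
  have hr := (continuous_rapMap (α := α) (β := β) (omHat α β ω)).measurable
  have hT : Measurable (collMap α β ω) :=
    measurable_collMap.comp (measurable_const.prodMk measurable_id)
  rw [hc, Measure.prod_smul_left, Measure.prod_smul_right, Measure.map_prod_map _ _ hr hr]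
  have h : MeasurePreserving (collMap α β ω) (Measure.map _ _) (Measure.map _ _) :=
    MeasurePreserving.of_semiconj
      ((hr.prodMap hr).measurePreserving _) (rapColl_measurePreserving (omHat α β ω))
      (fun x => (collMap_rapMap hw x).symm) hT
  exact (h.smul_measure c).smul_measure c

end Collision

/-! ### L¹ estimates for the collision operator -/

section Operator

variable {α β : ℝ}

/-- The Euclidean unit sphere `S² ⊂ ℝ³`. -/
abbrev Sph : Type := Metric.sphere (0 : E3) 1

instance : IsFiniteMeasure sphMeas := by unfold sphMeas; infer_instance

lemma sphMeas_real_univ : sphMeas.real Set.univ = 4 * π := by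
  rw [Measure.real, sphMeas, Measure.toSphere_apply_univ, EuclideanSpace.volume_ball_fin_three]
  simp [ENNReal.toReal_ofReal (show 0 ≤ π * 4 / 3 by positivity)]
  ring

lemma nuMeas_le_volume : nuMeas α β ≤ volume := by
  calc nuMeas α β ≤ (volume : Measure E3).withDensity 1 := by
        refine withDensity_mono (Filter.Eventually.of_forall fun p => ?_)
        have : Real.toNNReal (pZ α β p)⁻¹ ≤ 1 := by
          simpa using inv_le_one_of_one_le₀ (one_le_pZ (α := α) (β := β) p)
        change ((Real.toNNReal (pZ α β p)⁻¹ : NNReal) : ENNReal) ≤ 1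
        exact_mod_cast this
    _ = volume := withDensity_one

lemma measurable_density : Measurable fun p : E3 => Real.toNNReal (pZ α β p)⁻¹ := by
  have := (continuous_pZ (α := α) (β := β)).measurable
  fun_prop

lemma integral_nuMeas (h : E3 → ℝ) : ∫ p, h p ∂(nuMeas α β) = ∫ p, (pZ α β p)⁻¹ * h p := by
  rw [nuMeas, integral_withDensity_eq_integral_smul measurable_density]
  refine integral_congr_ae (Filter.Eventually.of_forall fun p => ?_)
  simp [NNReal.smul_def, (pZ_pos (α := α) (β := β) p).le]

lemma integrable_nuMeas_iff (h : E3 → ℝ) :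
    Integrable h (nuMeas α β) ↔ Integrable fun p => (pZ α β p)⁻¹ * h p := by
  rw [nuMeas, integrable_withDensity_iff_integrable_smul measurable_density]
  refine integrable_congr (Filter.Eventually.of_forall fun p => ?_)
  simp [NNReal.smul_def, (pZ_pos (α := α) (β := β) p).le]

/-- The measure `(dp̄ / p⁰) (dq̄ / q⁰) dω` on triples `(p̄, (q̄, ω))`. -/
noncomputable abbrev triMeas (α β : ℝ) : Measure (E3 × (E3 × Sph)) :=
  (nuMeas α β).prod ((nuMeas α β).prod sphMeas)

/-- The collision acting on triples, `(p̄, (q̄, ω)) ↦ (p̄′, (q̄′, ω))`. -/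
noncomputable def triMap (α β : ℝ) (x : E3 × (E3 × Sph)) : E3 × (E3 × Sph) :=
  (pPr α β x.1 x.2.1 x.2.2, (qPr α β x.1 x.2.1 x.2.2, x.2.2))

lemma mdot_omHat_sphere (hα : 0 < α) (hβ : 0 < β) (ω : Sph) :
    mdot α β (omHat α β ω) (omHat α β ω) = 1 :=
  mdot_omHat hα hβ (ne_zero_of_mem_unit_sphere ω)

lemma triMap_measurePreserving (hα : 0 < α) (hβ : 0 < β) :
    MeasurePreserving (triMap α β) (triMeas α β) (triMeas α β) := by
  have h1 : MeasurePreserving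
      (fun x : Sph × (E3 × E3) => (id x.1, collMap α β (x.1 : E3) x.2))
      (sphMeas.prod ((nuMeas α β).prod (nuMeas α β)))
      (sphMeas.prod ((nuMeas α β).prod (nuMeas α β))) := by
    refine (MeasurePreserving.id sphMeas).skew_product
      (g := fun (ω : Sph) x => collMap α β (ω : E3) x) ?_ ?_
    · exact measurable_collMap.comp (measurable_subtype_coe.prodMap measurable_id)
    · exact Filter.Eventually.of_forall fun ω =>
        (collMap_measurePreserving (mdot_omHat_sphere hα hβ ω)).map_eq
  have h2 := measurePreserving_prodAssoc (nuMeas α β) (nuMeas α β) sphMeas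
  exact h2.comp (Measure.measurePreserving_swap.comp
    (h1.comp (Measure.measurePreserving_swap.comp h2.symm)))

lemma triMap_involutive (hα : 0 < α) (hβ : 0 < β) : Function.Involutive (triMap α β) := by
  rintro ⟨p, q, ω⟩
  have h := collMap_involutive (mdot_omHat_sphere hα hβ ω) (p, q)
  simp only [collMap, Prod.mk.injEq] at h
  simp only [triMap, h.1, h.2]

/-- The integrand `f(p̄) f(q̄) S₀(p̄, q̄, p̄′, q̄′)` of the loss term. -/
noncomputable def lossF (α β : ℝ) (S₀ : E3 → E3 → E3 → E3 → ℝ) (f : E3 → ℝ)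
    (x : E3 × (E3 × Sph)) : ℝ :=
  f x.1 * f x.2.1 * S₀ x.1 x.2.1 (pPr α β x.1 x.2.1 x.2.2) (qPr α β x.1 x.2.1 x.2.2)

/-- Since the collision is an involution and `S₀` is symmetric, the integrand of the gain term is
the integrand of the loss term composed with the collision. -/
lemma gain_eq_lossF_triMap (hα : 0 < α) (hβ : 0 < β) {S₀ : E3 → E3 → E3 → E3 → ℝ}
    (hsymm : ∀ p q p' q', S₀ p q p' q' = S₀ p' q' p q) (f : E3 → ℝ) (p q : E3) (ω : Sph) :
    f (pPr α β p q ω) * f (qPr α β p q ω) * S₀ p q (pPr α β p q ω) (qPr α β p q ω) =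
      lossF α β S₀ f (triMap α β (p, (q, ω))) := by
  have h := triMap_involutive hα hβ (p, (q, ω))
  simp only [triMap, Prod.mk.injEq] at h
  simp only [lossF, triMap, h.1, h.2.1]
  rw [hsymm p q]

lemma measurable_lossF (hα : 0 < α) (hβ : 0 < β) {S₀ : E3 → E3 → E3 → E3 → ℝ}
    (hS : Measurable fun x : (E3 × E3) × E3 × E3 => S₀ x.1.1 x.1.2 x.2.1 x.2.2)
    {f : E3 → ℝ} (hf : Measurable f) : Measurable (lossF α β S₀ f) := by
  have hT := (triMap_measurePreserving hα hβ).measurable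
  have h1 : Measurable fun x : E3 × (E3 × Sph) => ((x.1, x.2.1),
      (pPr α β x.1 x.2.1 x.2.2, qPr α β x.1 x.2.1 x.2.2)) :=
    (measurable_fst.prodMk (measurable_fst.comp measurable_snd)).prodMk
      ((measurable_fst.comp hT).prodMk ((measurable_fst.comp measurable_snd).comp hT))
  exact ((hf.comp measurable_fst).mul (hf.comp (measurable_fst.comp measurable_snd))).mul
    (hS.comp h1)

lemma integrable_tensor {a b : E3 → ℝ} (ha : Integrable a) (hb : Integrable b) :
    Integrable (fun x : E3 × (E3 × Sph) => a x.1 * b x.2.1) (triMeas α β) := by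
  have h := (ha.mono_measure (nuMeas_le_volume (α := α) (β := β))).mul_prod
    ((hb.mono_measure (nuMeas_le_volume (α := α) (β := β))).mul_prod
      (integrable_const (1 : ℝ) (μ := sphMeas)))
  simpa using h

lemma integral_tensor_le {a b : E3 → ℝ} (ha : Integrable a) (hb : Integrable b) :
    ∫ x, |a x.1| * |b x.2.1| ∂(triMeas α β) ≤ 4 * π * (∫ p, |a p|) * ∫ p, |b p| := by
  have h0 : ∫ x, |a x.1| * |b x.2.1| ∂(triMeas α β) =
      (∫ p, |a p| ∂(nuMeas α β)) * ((∫ p, |b p| ∂(nuMeas α β)) * (4 * π)) := by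
    have h2 := integral_prod_mul (μ := nuMeas α β) (ν := sphMeas) (fun p => |b p|)
      (fun _ => (1 : ℝ))
    have h1 := integral_prod_mul (μ := nuMeas α β) (ν := (nuMeas α β).prod sphMeas)
      (fun p => |a p|) (fun z => |b z.1| * 1)
    rw [h2] at h1
    simpa [sphMeas_real_univ] using h1
  have hle {c : E3 → ℝ} (hc : Integrable c) : ∫ p, |c p| ∂(nuMeas α β) ≤ ∫ p, |c p| :=
    integral_mono_measure nuMeas_le_volume (Filter.Eventually.of_forall fun p => abs_nonneg _)
      hc.abs
  have ha0 : 0 ≤ ∫ p, |a p| := integral_nonneg fun _ => abs_nonneg _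
  have hb0 : 0 ≤ ∫ p, |b p| ∂(nuMeas α β) := integral_nonneg fun _ => abs_nonneg _
  rw [h0]
  calc _ ≤ (∫ p, |a p|) * ((∫ p, |b p|) * (4 * π)) := by
        have := hle ha
        have := hle hb
        gcongr
    _ = _ := by ring

/-- The integrand of the gain term minus the integrand of the loss term. -/
noncomputable def netF (α β : ℝ) (S₀ : E3 → E3 → E3 → E3 → ℝ) (f : E3 → ℝ)
    (x : E3 × (E3 × Sph)) : ℝ :=
  lossF α β S₀ f (triMap α β x) - lossF α β S₀ f x

variable {C₁ : ℝ} {S₀ : E3 → E3 → E3 → E3 → ℝ}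

lemma integrable_lossF (hα : 0 < α) (hβ : 0 < β)
    (hS : Measurable fun x : (E3 × E3) × E3 × E3 => S₀ x.1.1 x.1.2 x.2.1 x.2.2)
    (hS0 : ∀ p q p' q', 0 ≤ S₀ p q p' q') (hS1 : ∀ p q p' q', S₀ p q p' q' ≤ C₁)
    {f : E3 → ℝ} (hf : Measurable f) (hfi : Integrable f) :
    Integrable (lossF α β S₀ f) (triMeas α β) := by
  refine ((integrable_tensor hfi hfi).norm.mul_const C₁).mono'
    (measurable_lossF hα hβ hS hf).aestronglyMeasurable (Filter.Eventually.of_forall fun x => ?_)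
  rw [lossF, norm_mul, Real.norm_of_nonneg (hS0 _ _ _ _)]
  exact mul_le_mul_of_nonneg_left (hS1 _ _ _ _) (norm_nonneg _)

lemma integrable_netF (hα : 0 < α) (hβ : 0 < β)
    (hS : Measurable fun x : (E3 × E3) × E3 × E3 => S₀ x.1.1 x.1.2 x.2.1 x.2.2)
    (hS0 : ∀ p q p' q', 0 ≤ S₀ p q p' q') (hS1 : ∀ p q p' q', S₀ p q p' q' ≤ C₁)
    {f : E3 → ℝ} (hf : Measurable f) (hfi : Integrable f) :
    Integrable (netF α β S₀ f) (triMeas α β) := by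
  have h := integrable_lossF hα hβ hS hS0 hS1 hf hfi
  exact ((triMap_measurePreserving hα hβ).integrable_comp_of_integrable h).sub h

lemma integral_comp_triMap (hα : 0 < α) (hβ : 0 < β) {F : E3 × (E3 × Sph) → ℝ}
    (hF : AEStronglyMeasurable F (triMeas α β)) :
    ∫ x, F (triMap α β x) ∂(triMeas α β) = ∫ x, F x ∂(triMeas α β) := by
  have h := triMap_measurePreserving hα hβ
  have h1 := integral_map (μ := triMeas α β) (φ := triMap α β) h.measurable.aemeasurable
    (f := F) (by rwa [h.map_eq])
  rw [h.map_eq] at h1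
  exact h1.symm

lemma integral_netF (hα : 0 < α) (hβ : 0 < β)
    (hS : Measurable fun x : (E3 × E3) × E3 × E3 => S₀ x.1.1 x.1.2 x.2.1 x.2.2)
    (hS0 : ∀ p q p' q', 0 ≤ S₀ p q p' q') (hS1 : ∀ p q p' q', S₀ p q p' q' ≤ C₁)
    {f : E3 → ℝ} (hf : Measurable f) (hfi : Integrable f) :
    ∫ x, netF α β S₀ f x ∂(triMeas α β) = 0 := by
  have h := integrable_lossF hα hβ hS hS0 hS1 hf hfi
  have hT : Integrable (fun x => lossF α β S₀ f (triMap α β x)) (triMeas α β) :=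
    (triMap_measurePreserving hα hβ).integrable_comp_of_integrable h
  unfold netF
  rw [integral_sub hT h,
    integral_comp_triMap hα hβ h.1, sub_self]

/-- Gain and loss contribute equally, which gives the factor `2`; the rest comes from
`f(p̄)f(q̄) - g(p̄)g(q̄) = (f - g)(p̄) f(q̄) + g(p̄) (f - g)(q̄)`. -/
lemma integral_abs_netF_sub_le (hα : 0 < α) (hβ : 0 < β)
    (hS : Measurable fun x : (E3 × E3) × E3 × E3 => S₀ x.1.1 x.1.2 x.2.1 x.2.2)
    (hS0 : ∀ p q p' q', 0 ≤ S₀ p q p' q') (hS1 : ∀ p q p' q', S₀ p q p' q' ≤ C₁)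
    {f g : E3 → ℝ} (hf : Measurable f) (hfi : Integrable f) (hg : Measurable g)
    (hgi : Integrable g) :
    ∫ x, |netF α β S₀ f x - netF α β S₀ g x| ∂(triMeas α β) ≤
      2 * (C₁ * (4 * π * ((∫ p, |f p|) + ∫ p, |g p|) * ∫ p, |f p - g p|)) := by
  have hC : 0 ≤ C₁ := (hS0 0 0 0 0).trans (hS1 0 0 0 0)
  have hT := triMap_measurePreserving hα hβ
  have hLf := integrable_lossF hα hβ hS hS0 hS1 hf hfi
  have hLg := integrable_lossF hα hβ hS hS0 hS1 hg hgi
  have hL : Integrable (fun x => |lossF α β S₀ f x - lossF α β S₀ g x|) (triMeas α β) :=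
    (hLf.sub hLg).abs
  have hfg : Integrable fun p => f p - g p := hfi.sub hgi
  have h1 : ∫ x, |netF α β S₀ f x - netF α β S₀ g x| ∂(triMeas α β) ≤
      2 * ∫ x, |lossF α β S₀ f x - lossF α β S₀ g x| ∂(triMeas α β) := by
    have hLT : Integrable (fun x => |lossF α β S₀ f (triMap α β x) -
        lossF α β S₀ g (triMap α β x)|) (triMeas α β) := hT.integrable_comp_of_integrable hL
    calc _ ≤ ∫ x, (|lossF α β S₀ f (triMap α β x) - lossF α β S₀ g (triMap α β x)| +
            |lossF α β S₀ f x - lossF α β S₀ g x|) ∂(triMeas α β) := by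
          refine integral_mono ?_ (hLT.add hL) fun x => ?_
          · exact ((integrable_netF hα hβ hS hS0 hS1 hf hfi).sub
              (integrable_netF hα hβ hS hS0 hS1 hg hgi)).abs
          · simp only [netF]
            rw [sub_sub_sub_comm]
            exact abs_sub _ _
      _ = _ := by
          rw [integral_add hLT hL, integral_comp_triMap hα hβ hL.1]; ring
  have h2 : ∫ x, |lossF α β S₀ f x - lossF α β S₀ g x| ∂(triMeas α β) ≤
      ∫ x, C₁ * (|f x.1 - g x.1| * |f x.2.1| + |g x.1| * |f x.2.1 - g x.2.1|)
        ∂(triMeas α β) := by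
    refine integral_mono hL
      (((integrable_tensor hfg.abs hfi.abs).add (integrable_tensor hgi.abs hfg.abs)).const_mul C₁)
      fun x => ?_
    simp only [lossF]
    rw [← sub_mul, abs_mul, abs_of_nonneg (hS0 _ _ _ _), mul_comm]
    refine mul_le_mul (hS1 _ _ _ _) ?_ (abs_nonneg _) hC
    rw [← abs_mul, ← abs_mul]
    refine le_trans (le_of_eq ?_) (abs_add_le _ _)
    congr 1; ring
  have h3 : ∫ x, C₁ * (|f x.1 - g x.1| * |f x.2.1| + |g x.1| * |f x.2.1 - g x.2.1|)
      ∂(triMeas α β) ≤ C₁ * (4 * π * ((∫ p, |f p|) + ∫ p, |g p|) * ∫ p, |f p - g p|) := by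
    rw [integral_const_mul]
    refine mul_le_mul_of_nonneg_left ?_ hC
    have ha := integral_tensor_le (α := α) (β := β) hfg hfi
    have hb := integral_tensor_le (α := α) (β := β) hgi hfg
    have hadd := integral_add (integrable_tensor (α := α) (β := β) hfg.abs hfi.abs)
      (integrable_tensor hgi.abs hfg.abs)
    refine (le_of_eq hadd).trans ?_
    linarith
  linarith

/-- The iterated integrals defining `Q(f, f)(p̄)` combine into one integral over `(q̄, ω)` for
almost every `p̄`, namely where the sections of both integrands are integrable. -/
lemma Qcoll_ae_eq (hα : 0 < α) (hβ : 0 < β)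
    (hS : Measurable fun x : (E3 × E3) × E3 × E3 => S₀ x.1.1 x.1.2 x.2.1 x.2.2)
    (hS0 : ∀ p q p' q', 0 ≤ S₀ p q p' q') (hS1 : ∀ p q p' q', S₀ p q p' q' ≤ C₁)
    (hsymm : ∀ p q p' q', S₀ p q p' q' = S₀ p' q' p q)
    {f : E3 → ℝ} (hf : Measurable f) (hfi : Integrable f) :
    Qcoll α β S₀ f f =ᵐ[nuMeas α β] fun p =>
      α * β ^ 2 * ∫ z, netF α β S₀ f (p, z) ∂((nuMeas α β).prod sphMeas) := by
  have h := integrable_lossF hα hβ hS hS0 hS1 hf hfi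
  have hT : Integrable (fun x => lossF α β S₀ f (triMap α β x)) (triMeas α β) :=
    (triMap_measurePreserving hα hβ).integrable_comp_of_integrable h
  filter_upwards [h.prod_right_ae, hT.prod_right_ae] with p hp hTp
  have h1 := integral_prod _ hp
  have h2 := integral_prod _ hTp
  simp only [netF]
  rw [integral_sub hTp hp, h1]
  rw [h2, integral_nuMeas, integral_nuMeas, Qcoll, Qplus, Qminus, ← mul_sub]
  simp only [← gain_eq_lossF_triMap hα hβ hsymm]
  simp only [lossF]

lemma integrable_Qcoll (hα : 0 < α) (hβ : 0 < β)
    (hS : Measurable fun x : (E3 × E3) × E3 × E3 => S₀ x.1.1 x.1.2 x.2.1 x.2.2)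
    (hS0 : ∀ p q p' q', 0 ≤ S₀ p q p' q') (hS1 : ∀ p q p' q', S₀ p q p' q' ≤ C₁)
    (hsymm : ∀ p q p' q', S₀ p q p' q' = S₀ p' q' p q)
    {f : E3 → ℝ} (hf : Measurable f) (hfi : Integrable f) :
    Integrable fun p => (pZ α β p)⁻¹ * Qcoll α β S₀ f f p := by
  rw [← integrable_nuMeas_iff]
  exact ((integrable_netF hα hβ hS hS0 hS1 hf hfi).integral_prod_left.const_mul _).congr
    (Qcoll_ae_eq hα hβ hS hS0 hS1 hsymm hf hfi).symm

/-- Conservation of the number of particles. -/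
lemma integral_Qcoll (hα : 0 < α) (hβ : 0 < β)
    (hS : Measurable fun x : (E3 × E3) × E3 × E3 => S₀ x.1.1 x.1.2 x.2.1 x.2.2)
    (hS0 : ∀ p q p' q', 0 ≤ S₀ p q p' q') (hS1 : ∀ p q p' q', S₀ p q p' q' ≤ C₁)
    (hsymm : ∀ p q p' q', S₀ p q p' q' = S₀ p' q' p q)
    {f : E3 → ℝ} (hf : Measurable f) (hfi : Integrable f) :
    ∫ p, (pZ α β p)⁻¹ * Qcoll α β S₀ f f p = 0 := by
  rw [← integral_nuMeas, integral_congr_ae (Qcoll_ae_eq hα hβ hS hS0 hS1 hsymm hf hfi),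
    integral_const_mul, ← integral_prod _ (integrable_netF hα hβ hS hS0 hS1 hf hfi),
    integral_netF hα hβ hS hS0 hS1 hf hfi, mul_zero]

/-- The Lipschitz estimate
`‖(1/p⁰)Q(f,f) - (1/p⁰)Q(g,g)‖ ≤ 2C (‖f‖ + ‖g‖) ‖f - g‖` with `C = 4πC₁αβ²`. -/
lemma integral_abs_Qcoll_sub_le (hα : 0 < α) (hβ : 0 < β)
    (hS : Measurable fun x : (E3 × E3) × E3 × E3 => S₀ x.1.1 x.1.2 x.2.1 x.2.2)
    (hS0 : ∀ p q p' q', 0 ≤ S₀ p q p' q') (hS1 : ∀ p q p' q', S₀ p q p' q' ≤ C₁)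
    (hsymm : ∀ p q p' q', S₀ p q p' q' = S₀ p' q' p q)
    {f g : E3 → ℝ} (hf : Measurable f) (hfi : Integrable f) (hg : Measurable g)
    (hgi : Integrable g) :
    ∫ p, |(pZ α β p)⁻¹ * Qcoll α β S₀ f f p - (pZ α β p)⁻¹ * Qcoll α β S₀ g g p| ≤
      2 * (4 * π * C₁ * α * β ^ 2) * ((∫ p, |f p|) + ∫ p, |g p|) * ∫ p, |f p - g p| := by
  have hNf := integrable_netF hα hβ hS hS0 hS1 hf hfi
  have hNg := integrable_netF hα hβ hS hS0 hS1 hg hgi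
  have hN : Integrable (fun x => |netF α β S₀ f x - netF α β S₀ g x|) (triMeas α β) :=
    (hNf.sub hNg).abs
  have hab : 0 ≤ α * β ^ 2 := by positivity
  have e1 : ∫ p, |(pZ α β p)⁻¹ * Qcoll α β S₀ f f p - (pZ α β p)⁻¹ * Qcoll α β S₀ g g p| =
      ∫ p, |Qcoll α β S₀ f f p - Qcoll α β S₀ g g p| ∂(nuMeas α β) := by
    rw [integral_nuMeas]
    congr 1 with p
    rw [← mul_sub, abs_mul, abs_of_pos (inv_pos.2 (pZ_pos p))]
  have e2 : ∫ p, |Qcoll α β S₀ f f p - Qcoll α β S₀ g g p| ∂(nuMeas α β) ≤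
      ∫ p, α * β ^ 2 * ∫ z, |netF α β S₀ f (p, z) - netF α β S₀ g (p, z)|
        ∂((nuMeas α β).prod sphMeas) ∂(nuMeas α β) := by
    refine integral_mono_of_nonneg (Filter.Eventually.of_forall fun p => abs_nonneg _)
      (hN.integral_prod_left.const_mul _) ?_
    filter_upwards [Qcoll_ae_eq hα hβ hS hS0 hS1 hsymm hf hfi,
      Qcoll_ae_eq hα hβ hS hS0 hS1 hsymm hg hgi, hNf.prod_right_ae, hNg.prod_right_ae]
      with p h1 h2 h3 h4
    rw [h1, h2, ← mul_sub, ← integral_sub h3 h4, abs_mul, abs_of_nonneg hab]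
    exact mul_le_mul_of_nonneg_left abs_integral_le_integral_abs hab
  rw [e1]
  refine e2.trans ?_
  rw [integral_const_mul, ← integral_prod _ hN]
  have e3 := mul_le_mul_of_nonneg_left
    (integral_abs_netF_sub_le hα hβ hS hS0 hS1 hf hfi hg hgi) hab
  refine e3.trans (le_of_eq ?_)
  ring

end Operator

/-! ### The regularized equation -/

lemma Qcoll_const_mul (α β : ℝ) (S₀ : E3 → E3 → E3 → E3 → ℝ) (c : ℝ) (f : E3 → ℝ) (p : E3) :
    Qcoll α β S₀ (fun x => c * f x) (fun x => c * f x) p = c ^ 2 * Qcoll α β S₀ f f p := by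
  have h (x y s : ℝ) : c * x * (c * y) * s = c ^ 2 * (x * y * s) := by ring
  have h' (k x : ℝ) : k * (c ^ 2 * x) = c ^ 2 * (k * x) := by ring
  simp only [Qcoll, Qplus, Qminus, h, integral_const_mul, h']
  ring

lemma Qcoll_zero (α β : ℝ) (S₀ : E3 → E3 → E3 → E3 → ℝ) (p : E3) :
    Qcoll α β S₀ (fun _ => 0) (fun _ => 0) p = 0 := by
  simp [Qcoll, Qplus, Qminus]

/-- For a nonnegative solution `w` of `√n w - (1/p⁰)Q(w, w) = u`, the function `U = √n w` satisfies
`‖U‖ ≤ r` (by conservation of mass), `‖U - u‖ ≤ 2Cr²/n`, and `n√n w - n u = (1/p⁰)Q(U, U)`. -/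
lemma rescaled_solution_bounds {C₁ α β : ℝ} (hα : 0 < α) (hβ : 0 < β)
    {S₀ : E3 → E3 → E3 → E3 → ℝ}
    (hS : Measurable fun x : (E3 × E3) × E3 × E3 => S₀ x.1.1 x.1.2 x.2.1 x.2.2)
    (hS0 : ∀ p q p' q', 0 ≤ S₀ p q p' q') (hS1 : ∀ p q p' q', S₀ p q p' q' ≤ C₁)
    (hsymm : ∀ p q p' q', S₀ p q p' q' = S₀ p' q' p q)
    {r : ℝ} {n : ℕ} (hn : 0 < n) {u w : L1} (hu : memX r u) (hw : memX r w)
    (heq : (fun p : E3 => √n * w p - (pZ α β p)⁻¹ * Qcoll α β S₀ (⇑w) (⇑w) p)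
      =ᵐ[volume] ⇑u) :
    ∫ p, |√n * w p| ≤ r ∧
    ∫ p, |√n * w p - u p| ≤ 2 * (4 * π * C₁ * α * β ^ 2) * r ^ 2 / n ∧
    ⇑(((n : ℝ) * √n) • w - (n : ℝ) • u) =ᵐ[volume] fun p =>
      (pZ α β p)⁻¹ * Qcoll α β S₀ (fun x => √n * w x) (fun x => √n * w x) p := by
  have hn0 : (0 : ℝ) < n := Nat.cast_pos.2 hn
  have hsn : 0 < √(n : ℝ) := Real.sqrt_pos.2 hn0
  have hsq : √(n : ℝ) ^ 2 = n := sq_sqrt hn0.le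
  have hC : 0 ≤ C₁ := (hS0 0 0 0 0).trans (hS1 0 0 0 0)
  have hwm : Measurable w := (Lp.stronglyMeasurable w).measurable
  have hwi : Integrable w := L1.integrable_coeFn w
  have hQi := integrable_Qcoll hα hβ hS hS0 hS1 hsymm hwm hwi
  -- integrating the equation, the collision term drops out
  have hmass : √n * ∫ p, w p = ∫ p, u p := by
    have h := integral_congr_ae heq
    rwa [integral_sub (hwi.const_mul _) hQi, integral_Qcoll hα hβ hS hS0 hS1 hsymm hwm hwi,
      integral_const_mul, sub_zero] at h
  have habs {f : L1} (hf : memX r f) : ∫ p, |f p| = ∫ p, f p :=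
    integral_congr_ae (hf.1.mono fun p hp => abs_of_nonneg hp)
  have hur : ∫ p, u p ≤ r := by
    rw [← habs hu]
    simpa [L1.norm_eq_integral_norm] using hu.2
  have hwnorm : √n * ∫ p, |w p| ≤ r := by rw [habs hw, hmass]; exact hur
  refine ⟨?_, ?_, ?_⟩
  · simp only [abs_mul, abs_of_pos hsn, integral_const_mul]
    exact hwnorm
  · have h1 : ∫ p, |√n * w p - u p| = ∫ p, |(pZ α β p)⁻¹ * Qcoll α β S₀ (⇑w) (⇑w) p -
        (pZ α β p)⁻¹ * Qcoll α β S₀ (fun _ => 0) (fun _ => 0) p| := by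
      refine integral_congr_ae (heq.mono fun p hp => ?_)
      simp only [Qcoll_zero, ← hp]
      congr 1; ring
    have h2 := integral_abs_Qcoll_sub_le hα hβ hS hS0 hS1 hsymm hwm hwi
      (measurable_const (a := (0 : ℝ))) (integrable_zero E3 ℝ volume)
    rw [h1]
    refine h2.trans ?_
    have h0 : 0 ≤ ∫ p, |w p| := integral_nonneg fun _ => abs_nonneg _
    have h3 : (∫ p, |w p|) ^ 2 ≤ r ^ 2 / n := by
      rw [le_div_iff₀ hn0, ← hsq, mul_comm, ← mul_pow]
      gcongr
    have h4 : 0 ≤ 2 * (4 * π * C₁ * α * β ^ 2) := by positivity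
    have h5 := mul_le_mul_of_nonneg_left h3 h4
    simp only [abs_zero, integral_zero, add_zero, sub_zero]
    calc _ = 2 * (4 * π * C₁ * α * β ^ 2) * (∫ p, |w p|) ^ 2 := by ring
      _ ≤ _ := h5
      _ = _ := by ring
  · filter_upwards [heq, Lp.coeFn_sub (((n : ℝ) * √n) • w) ((n : ℝ) • u),
      Lp.coeFn_smul ((n : ℝ) * √n) w, Lp.coeFn_smul (n : ℝ) u] with p h1 h2 h3 h4
    rw [h2, Pi.sub_apply, h3, h4, Qcoll_const_mul, hsq]
    simp only [Pi.smul_apply, smul_eq_mul, ← h1]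
    ring

theorem statement_13
    (C₀ C₁ α β : ℝ) (hC₀ : 0 < C₀) (hC₁ : 0 < C₁) (hα : C₀ ≤ α) (hβ : C₀ ≤ β)
    (S₀ : E3 → E3 → E3 → E3 → ℝ)
    (hS₀meas : Measurable fun x : (E3 × E3) × E3 × E3 => S₀ x.1.1 x.1.2 x.2.1 x.2.2)
    (hS₀nonneg : ∀ p q p' q', 0 ≤ S₀ p q p' q')
    (hS₀bdd : ∀ p q p' q', S₀ p q p' q' ≤ C₁)
    (hS₀symm : ∀ p q p' q', S₀ p q p' q' = S₀ p' q' p q)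
    (r : ℝ) (hr : 0 < r) (n m : ℕ)
    (hn4 : 4 ≤ n) (hn1 : (1 + 4 * Real.pi * C₁ * α * β ^ 2 * r) / Real.sqrt n ≤ 1)
    (hn2 : 3 * (4 * Real.pi * C₁ * α * β ^ 2) * r * (1 + 4 * Real.pi * C₁ * α * β ^ 2 * r) / Real.sqrt n ≤ 1 / 2)
    (hm4 : 4 ≤ m) (hm1 : (1 + 4 * Real.pi * C₁ * α * β ^ 2 * r) / Real.sqrt m ≤ 1)
    (hm2 : 3 * (4 * Real.pi * C₁ * α * β ^ 2) * r * (1 + 4 * Real.pi * C₁ * α * β ^ 2 * r) / Real.sqrt m ≤ 1 / 2)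
    (u v wu wv : L1) (hu : memX r u) (hv : memX r v) (hwu : memX r wu) (hwv : memX r wv)
    (hequ : (fun p : E3 => Real.sqrt n * wu p - (pZ α β p)⁻¹ * Qcoll α β S₀ (⇑wu) (⇑wu) p)
      =ᵐ[volume] ⇑u)
    (heqv : (fun p : E3 => Real.sqrt m * wv p - (pZ α β p)⁻¹ * Qcoll α β S₀ (⇑wv) (⇑wv) p)
      =ᵐ[volume] ⇑v) :
    ‖(((n : ℝ) * Real.sqrt n) • wu - (n : ℝ) • u) -
        (((m : ℝ) * Real.sqrt m) • wv - (m : ℝ) • v)‖ ≤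
      4 * (4 * Real.pi * C₁ * α * β ^ 2) * r * (2 * (4 * Real.pi * C₁ * α * β ^ 2) * r ^ 2 / n + 2 * (4 * Real.pi * C₁ * α * β ^ 2) * r ^ 2 / m + ‖u - v‖) := by
  have hα0 : 0 < α := hC₀.trans_le hα
  have hβ0 : 0 < β := hC₀.trans_le hβ
  obtain ⟨hU, hUu, hQu⟩ := rescaled_solution_bounds hα0 hβ0 hS₀meas hS₀nonneg hS₀bdd hS₀symm
    (by omega) hu hwu hequ
  obtain ⟨hV, hVv, hQv⟩ := rescaled_solution_bounds hα0 hβ0 hS₀meas hS₀nonneg hS₀bdd hS₀symm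
    (by omega) hv hwv heqv
  have hm {f : L1} (c : ℝ) : Measurable fun p => c * f p :=
    (Lp.stronglyMeasurable f).measurable.const_mul c
  have hi {f : L1} (c : ℝ) : Integrable fun p => c * f p :=
    (L1.integrable_coeFn f).const_mul c
  have hui := L1.integrable_coeFn u
  have hvi := L1.integrable_coeFn v
  have hnorm : ‖u - v‖ = ∫ p, |u p - v p| := by
    rw [L1.norm_eq_integral_norm]
    refine integral_congr_ae ((Lp.coeFn_sub u v).mono fun p hp => ?_)
    simp only [hp, Pi.sub_apply, Real.norm_eq_abs]
  have hLHS : ‖(((n : ℝ) * Real.sqrt n) • wu - (n : ℝ) • u) -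
        (((m : ℝ) * Real.sqrt m) • wv - (m : ℝ) • v)‖ =
      ∫ p, |(pZ α β p)⁻¹ * Qcoll α β S₀ (fun x => √n * wu x) (fun x => √n * wu x) p -
        (pZ α β p)⁻¹ * Qcoll α β S₀ (fun x => √m * wv x) (fun x => √m * wv x) p| := by
    rw [L1.norm_eq_integral_norm]
    refine integral_congr_ae ?_
    filter_upwards [Lp.coeFn_sub (((n : ℝ) * √n) • wu - (n : ℝ) • u)
      (((m : ℝ) * √m) • wv - (m : ℝ) • v), hQu, hQv] with p h1 h2 h3
    rw [h1, Pi.sub_apply, h2, h3, Real.norm_eq_abs]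
  have hmain := integral_abs_Qcoll_sub_le hα0 hβ0 hS₀meas hS₀nonneg hS₀bdd hS₀symm
    (hm (f := wu) √n) (hi √n) (hm (f := wv) √m) (hi √m)
  have htri : ∫ p, |√n * wu p - √m * wv p| ≤
      (∫ p, |√n * wu p - u p|) + (∫ p, |√m * wv p - v p|) + ∫ p, |u p - v p| := by
    have i1 : Integrable fun p => |√n * wu p - u p| := ((hi √n).sub hui).abs
    have i2 : Integrable fun p => |√m * wv p - v p| := ((hi √m).sub hvi).abs
    have i3 : Integrable fun p => |u p - v p| := (hui.sub hvi).abs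
    have i12 : Integrable fun p => |√n * wu p - u p| + |√m * wv p - v p| := i1.add i2
    rw [← integral_add i1 i2, ← integral_add i12 i3]
    refine integral_mono ((hi √n).sub (hi √m)).abs (i12.add i3) fun p => ?_
    have h1 := abs_add_le ((√n * wu p - u p) - (√m * wv p - v p)) (u p - v p)
    have h2 := abs_sub (√n * wu p - u p) (√m * wv p - v p)
    have h3 : (√n * wu p - u p) - (√m * wv p - v p) + (u p - v p) = √n * wu p - √m * wv p := by
      ring
    rw [h3] at h1
    exact h1.trans (by linarith)
  have hC : 0 ≤ 4 * π * C₁ * α * β ^ 2 := by positivity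
  have hd0 : 0 ≤ ∫ p, |√n * wu p - √m * wv p| := integral_nonneg fun _ => abs_nonneg _
  rw [hLHS, hnorm]
  refine hmain.trans ?_
  calc _ ≤ 2 * (4 * π * C₁ * α * β ^ 2) * (r + r) * ∫ p, |√n * wu p - √m * wv p| := by gcongr
    _ = 4 * (4 * π * C₁ * α * β ^ 2) * r * ∫ p, |√n * wu p - √m * wv p| := by ring
    _ ≤ _ := by
      refine mul_le_mul_of_nonneg_left ?_ (by positivity)
      linarith
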